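/- (Orthonormality of Krawtchouk polynomials.) Let 0 < γ < 1 and let M be a positive integer. For all integers 0 ≤ n, m ≤ M, ∑_{k=0}^{M} binom(M, k) · γ^k · (1−γ)^{M−k} · K_n^M(k; γ) · K_m^M(k; γ) = δ_{n,m}. -/

import Mathlib

open Finset

/-- The Pochhammer symbol `(a)ⱼ = a(a+1)⋯(a+j−1)`. -/
noncomputable def poch (a : ℝ) (j : ℕ) : ℝ := (ascPochhammer ℝ j).eval a

/-- The orthonormal Krawtchouk polynomial
`Kₙ^M(k; γ) = √(M!/(n!(M−n)!)) (γ/(1−γ))^{n/2}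
  ∑_{j=0}^{min(n,k)} (−n)ⱼ(−k)ⱼ/((−M)ⱼ j!) · γ^{−j}`. -/
noncomputable def krawtchouk (M : ℕ) (γ : ℝ) (n k : ℕ) : ℝ :=
  Real.sqrt ((Nat.factorial M : ℝ) /
      ((Nat.factorial n) * (Nat.factorial (M - n)))) *
    Real.rpow (γ / (1 - γ)) ((n : ℝ) / 2) *
    ∑ j ∈ range (min n k + 1),
      poch (-(n : ℝ)) j * poch (-(k : ℝ)) j /
        (poch (-(M : ℝ)) j * (Nat.factorial j)) * γ⁻¹ ^ j

/-!
The generating polynomial `∑ₙ binom(M, n) Sₙ(k) tⁿ` of the hypergeometric sums `Sₙ(k)` is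
`(1 + t)^(M - k) (1 + (1 - γ⁻¹) t)^k`. Multiplying it by the same polynomial in `s` and averaging
over the binomial weights in `k`, the binomial theorem gives
`(γ (1 + (1 - γ⁻¹) t) (1 + (1 - γ⁻¹) s) + (1 - γ) (1 + t) (1 + s))^M = (1 + (γ⁻¹ - 1) t s)^M`.
The right-hand side has no monomial `tⁿ sᵐ` with `n ≠ m`, and its diagonal coefficients
`binom(M, n) (γ⁻¹ - 1)ⁿ` are the squared norms.
-/

section GeneratingPolynomial

open Polynomial

lemma coeff_one_add_C_mul_X_pow {R : Type*} [CommSemiring R] (a : R) (M n : ℕ) :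
    ((1 + C a * X) ^ M).coeff n = M.choose n * a ^ n := by
  have hcomp : (1 + C a * X : R[X]) ^ M = ((1 + X) ^ M).comp (C a * X) := by
    simp only [pow_comp, add_comp, one_comp, X_comp]
  rw [hcomp, comp_C_mul_X_coeff, coeff_one_add_X_pow]

variable {R : Type*} [CommRing R]

/-- The generating polynomial in the degree `n` of the Krawtchouk values at the fixed point `k`,
unnormalized and without denominators. The parameter `c` plays the role of `γ⁻¹`. -/
noncomputable def krawtchoukGen (M : ℕ) (c : R) (k : ℕ) : R[X] :=
  (1 + X) ^ (M - k) * (1 + C (1 - c) * X) ^ k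

lemma krawtchoukGen_eq_sum (c : R) {M k : ℕ} (hk : k ≤ M) :
    krawtchoukGen M c k =
      ∑ j ∈ range (k + 1), C (k.choose j * (-c) ^ j) * (X ^ j * (1 + X) ^ (M - j)) := by
  have hsplit : (1 : R[X]) + C (1 - c) * X = C (-c) * X + (1 + X) := by
    rw [C_sub, C_neg, C_1]
    ring
  rw [krawtchoukGen, hsplit, add_pow (C (-c) * X), mul_sum]
  refine sum_congr rfl fun j hj ↦ ?_
  have hexp : M - j = (M - k) + (k - j) := by
    have := mem_range.1 hj
    omega
  rw [hexp, pow_add, C_mul, C_pow, C_eq_natCast]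
  ring

lemma coeff_krawtchoukGen (c : R) {M k : ℕ} (hk : k ≤ M) (n : ℕ) :
    (krawtchoukGen M c k).coeff n =
      ∑ j ∈ range (min n k + 1), k.choose j * (-c) ^ j * (M - j).choose (n - j) := by
  have hrange : range (min n k + 1) = {j ∈ range (k + 1) | j ≤ n} := by
    ext j
    simp only [mem_range, mem_filter]
    omega
  rw [krawtchoukGen_eq_sum c hk, finsetSum_coeff, hrange, sum_filter]
  refine sum_congr rfl fun j _ ↦ ?_
  rw [coeff_C_mul, coeff_X_pow_mul', mul_ite, mul_zero, coeff_one_add_X_pow]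

lemma sum_binomial_mul_generating_mul_generating {γ c : R} (hc : γ * c = 1) (M : ℕ) (t s : R) :
    ∑ k ∈ range (M + 1), M.choose k * γ ^ k * (1 - γ) ^ (M - k) *
        (((1 + t) ^ (M - k) * (1 + (1 - c) * t) ^ k) *
          ((1 + s) ^ (M - k) * (1 + (1 - c) * s) ^ k)) =
      (1 + (c - 1) * t * s) ^ M := by
  have hbase : 1 + (c - 1) * t * s =
      γ * ((1 + (1 - c) * t) * (1 + (1 - c) * s)) + (1 - γ) * ((1 + t) * (1 + s)) := by
    linear_combination (t + s - (c - 2) * t * s) * hc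
  rw [hbase, add_pow]
  refine sum_congr rfl fun k _ ↦ ?_
  simp only [mul_pow]
  ring

lemma sum_binomial_mul_coeff_mul_coeff {γ c : R} (hc : γ * c = 1) (M n m : ℕ) :
    ∑ k ∈ range (M + 1), M.choose k * γ ^ k * (1 - γ) ^ (M - k) *
        (krawtchoukGen M c k).coeff n * (krawtchoukGen M c k).coeff m =
      if n = m then M.choose n * (c - 1) ^ n else 0 := by
  -- `t` is the inner variable `C X` and `s` the outer variable `X` of `R[X][X]`.
  have hgen : ∑ k ∈ range (M + 1), C (C (M.choose k * γ ^ k * (1 - γ) ^ (M - k))) *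
      (C (krawtchoukGen M c k) * (krawtchoukGen M c k).map C) =
        (1 + C (C (c - 1) * X) * X) ^ M := by
    have hc' : (C (C γ) : R[X][X]) * C (C c) = 1 := by
      rw [← C_mul, ← C_mul, hc, C_1, C_1]
    simpa [krawtchoukGen] using
      sum_binomial_mul_generating_mul_generating hc' M (C X) X
  have hcoeff : ∑ k ∈ range (M + 1), M.choose k * γ ^ k * (1 - γ) ^ (M - k) *
      ((krawtchoukGen M c k).coeff m * (krawtchoukGen M c k).coeff n) =
        if n = m then M.choose n * (c - 1) ^ n else 0 := by
    simpa only [finsetSum_coeff, coeff_C_mul, coeff_map, coeff_mul_C, coeff_one_add_C_mul_X_pow,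
      mul_pow, ← C_pow, ← C_eq_natCast, coeff_X_pow, mul_ite, mul_one, mul_zero,
      eq_comm (a := m)] using congrArg (fun p ↦ (p.coeff n).coeff m) hgen
  rw [← hcoeff]
  exact sum_congr rfl fun k _ ↦ by ring

end GeneratingPolynomial

lemma poch_neg_natCast (n j : ℕ) :
    poch (-(n : ℝ)) j = (-1) ^ j * (j.factorial * n.choose j) := by
  rw [poch, ascPochhammer_eval_neg_eq_descPochhammer, descPochhammer_eval_eq_descFactorial,
    Nat.descFactorial_eq_factorial_mul_choose, Nat.cast_mul]

lemma choose_mul_poch_div_poch {M n j : ℕ} (hj : j ≤ n) (hn : n ≤ M) (k : ℕ) :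
    M.choose n * (poch (-(n : ℝ)) j * poch (-(k : ℝ)) j / (poch (-(M : ℝ)) j * j.factorial)) =
      k.choose j * (-1) ^ j * (M - j).choose (n - j) := by
  have hchoose : (M.choose n * n.choose j : ℝ) = M.choose j * (M - j).choose (n - j) := by
    exact_mod_cast Nat.choose_mul hj
  have hM : (M.choose j : ℝ) ≠ 0 := by
    exact_mod_cast (Nat.choose_pos (hj.trans hn)).ne'
  have hfact : (j.factorial : ℝ) ≠ 0 := by
    exact_mod_cast j.factorial_ne_zero
  rw [poch_neg_natCast, poch_neg_natCast, poch_neg_natCast]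
  field_simp
  linear_combination hchoose * (k.choose j : ℝ)

lemma choose_mul_sum_poch_eq_coeff_krawtchoukGen (γ : ℝ) {M n k : ℕ} (hn : n ≤ M) (hk : k ≤ M) :
    M.choose n * ∑ j ∈ range (min n k + 1),
      poch (-(n : ℝ)) j * poch (-(k : ℝ)) j / (poch (-(M : ℝ)) j * j.factorial) * γ⁻¹ ^ j =
      (krawtchoukGen M γ⁻¹ k).coeff n := by
  rw [coeff_krawtchoukGen _ hk, mul_sum]
  refine sum_congr rfl fun j hj ↦ ?_
  have hjn : j ≤ n := by
    have := mem_range.1 hj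
    omega
  rw [← mul_assoc, choose_mul_poch_div_poch hjn hn, neg_pow γ⁻¹]
  ring

/-- The squared norm of the function `k ↦ (krawtchoukGen M γ⁻¹ k).coeff n` with respect to the
binomial weights of parameter `γ`. -/
noncomputable def krawtchoukNormSq (M : ℕ) (γ : ℝ) (n : ℕ) : ℝ :=
  M.choose n * (γ⁻¹ - 1) ^ n

lemma krawtchoukNormSq_pos {γ : ℝ} (hγ0 : 0 < γ) (hγ1 : γ < 1) {M n : ℕ} (hn : n ≤ M) :
    0 < krawtchoukNormSq M γ n := by
  have hchoose : (0 : ℝ) < M.choose n := by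
    exact_mod_cast Nat.choose_pos hn
  exact mul_pos hchoose (pow_pos (sub_pos.2 ((one_lt_inv₀ hγ0).2 hγ1)) n)

lemma rpow_div_one_sub_eq_inv_sqrt {γ : ℝ} (hγ0 : 0 < γ) (hγ1 : γ < 1) (n : ℕ) :
    Real.rpow (γ / (1 - γ)) ((n : ℝ) / 2) = (√((γ⁻¹ - 1) ^ n))⁻¹ := by
  have hpos : 0 < γ⁻¹ - 1 := sub_pos.2 ((one_lt_inv₀ hγ0).2 hγ1)
  have hratio : γ / (1 - γ) = (γ⁻¹ - 1)⁻¹ := by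
    have : 1 - γ ≠ 0 := (sub_pos.2 hγ1).ne'
    field_simp
  rw [Real.rpow_eq_pow, hratio, Real.inv_rpow hpos.le, Real.sqrt_eq_rpow,
    ← Real.rpow_natCast_mul hpos.le, mul_one_div]

lemma krawtchouk_eq_coeff_div_sqrt {γ : ℝ} (hγ0 : 0 < γ) (hγ1 : γ < 1) {M n k : ℕ}
    (hn : n ≤ M) (hk : k ≤ M) :
    krawtchouk M γ n k = (krawtchoukGen M γ⁻¹ k).coeff n / √(krawtchoukNormSq M γ n) := by
  rw [krawtchouk, ← Nat.cast_choose ℝ hn, rpow_div_one_sub_eq_inv_sqrt hγ0 hγ1,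
    ← choose_mul_sum_poch_eq_coeff_krawtchoukGen γ hn hk, krawtchoukNormSq,
    Real.sqrt_mul (Nat.cast_nonneg _), ← div_mul_div_comm, Real.div_sqrt,
    div_eq_mul_inv _ √((γ⁻¹ - 1) ^ n)]
  ring

/-- **orthonormality of Krawtchouk polynomials.** For `0 < γ < 1`,
a positive integer `M`, and all integers `0 ≤ n, m ≤ M`,
`∑_{k=0}^{M} binom(M,k) γᵏ (1−γ)^{M−k} Kₙ^M(k;γ) Kₘ^M(k;γ) = δₙₘ`. -/
theorem krawtchouk_orthonormal (γ : ℝ) (hγ0 : 0 < γ) (hγ1 : γ < 1)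
    (M : ℕ) (hM : 1 ≤ M) (n m : ℕ) (hn : n ≤ M) (hm : m ≤ M) :
    ∑ k ∈ range (M + 1), (Nat.choose M k : ℝ) * γ ^ k * (1 - γ) ^ (M - k) *
        krawtchouk M γ n k * krawtchouk M γ m k =
      if n = m then (1 : ℝ) else 0 := by
  have hγ : γ * γ⁻¹ = 1 := mul_inv_cancel₀ hγ0.ne'
  calc
    _ = (∑ k ∈ range (M + 1), M.choose k * γ ^ k * (1 - γ) ^ (M - k) *
          (krawtchoukGen M γ⁻¹ k).coeff n * (krawtchoukGen M γ⁻¹ k).coeff m) /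
            (√(krawtchoukNormSq M γ n) * √(krawtchoukNormSq M γ m)) := by
      rw [sum_div]
      refine sum_congr rfl fun k hk ↦ ?_
      have hkM : k ≤ M := Nat.lt_succ_iff.1 (mem_range.1 hk)
      rw [krawtchouk_eq_coeff_div_sqrt hγ0 hγ1 hn hkM, krawtchouk_eq_coeff_div_sqrt hγ0 hγ1 hm hkM]
      ring
    _ = (if n = m then krawtchoukNormSq M γ n else 0) /
          (√(krawtchoukNormSq M γ n) * √(krawtchoukNormSq M γ m)) := by
      rw [sum_binomial_mul_coeff_mul_coeff hγ, krawtchoukNormSq]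
    _ = if n = m then 1 else 0 := by
      have hpos := krawtchoukNormSq_pos hγ0 hγ1 hn
      rw [ite_div, zero_div]
      refine if_ctx_congr Iff.rfl (fun hnm ↦ ?_) fun _ ↦ rfl
      rw [← hnm, Real.mul_self_sqrt hpos.le, div_self hpos.ne']
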